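/- Let X be a three-dimensional normed space over ℝ or ℂ and Y ⊆ X a two-dimensional subspace with λ(Y,X) > 1. Then the minimal projection P : X → Y is unique, and moreover it is 2-strongly unique: there exists r > 0 such that ‖Q‖² ≥ ‖P‖² + r‖Q − P‖² for every projection Q : X → Y. -/

import Mathlib

open Metric Module

noncomputable section

variable {𝕜 : Type*} [RCLike 𝕜] {X : Type*} [NormedAddCommGroup X] [NormedSpace 𝕜 X]

def IsProjOnto (Y : Submodule 𝕜 X) (P : X →L[𝕜] X) : Prop :=
  (∀ x, P x ∈ Y) ∧ ∀ y ∈ Y, P y = y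

def relProjConst (Y : Submodule 𝕜 X) : ℝ :=
  sInf {c | ∃ P : X →L[𝕜] X, IsProjOnto Y P ∧ ‖P‖ = c}

def MinProjSet (Y : Submodule 𝕜 X) : Set (X →L[𝕜] X) :=
  {P | IsProjOnto Y P ∧ ‖P‖ = relProjConst Y}

lemma aux_isCompact_convexHull {E : Type*} [NormedAddCommGroup E] [NormedSpace ℝ E]
    [FiniteDimensional ℝ E] {s : Set E} (hs : IsCompact s) : IsCompact (convexHull ℝ s) := by
  classical
  obtain rfl | ⟨z0, hz0⟩ := s.eq_empty_or_nonempty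
  · simp
  set n := finrank ℝ E + 1 with hn
  have hK : IsCompact ((stdSimplex ℝ (Fin n)) ×ˢ (Set.pi Set.univ fun _ : Fin n => s)) :=
    (isCompact_stdSimplex ℝ (Fin n)).prod (isCompact_univ_pi fun _ => hs)
  have hF : Continuous (fun p : (Fin n → ℝ) × (Fin n → E) => ∑ i, p.1 i • p.2 i) := by fun_prop
  convert hK.image hF using 1
  ext x
  constructor
  · intro hx
    obtain ⟨ι, _, z, w, hz, haff, hw, hw1, hx⟩ := eq_pos_convex_span_of_mem_convexHull hx
    have hcard : Fintype.card ι ≤ n := by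
      have h1 := haff.card_le_finrank_succ
      have h2 := Submodule.finrank_le (vectorSpan ℝ (Set.range z))
      omega
    obtain ⟨e⟩ : Nonempty (ι ↪ Fin n) :=
      Function.Embedding.nonempty_of_card_le (by simpa using hcard)
    refine ⟨(Function.extend e w 0, Function.extend e z (fun _ => z0)), ⟨⟨?_, ?_⟩, ?_⟩, ?_⟩
    · intro j
      by_cases hj : ∃ i, e i = j
      · obtain ⟨i, rfl⟩ := hj
        simpa [e.injective.extend_apply] using (hw i).le
      · simp [Function.extend_apply' _ _ _ hj]
    · dsimp only
      rw [← hw1]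
      refine (Fintype.sum_of_injective e e.injective _ _ ?_ ?_).symm
      · intro j hj
        rw [Function.extend_apply' _ _ _ hj]; rfl
      · intro i; rw [e.injective.extend_apply]
    · intro j _
      by_cases hj : ∃ i, e i = j
      · obtain ⟨i, rfl⟩ := hj
        simpa [e.injective.extend_apply] using hz ⟨i, rfl⟩
      · simpa [Function.extend_apply' _ _ _ hj] using hz0
    · dsimp only
      rw [← hx]
      refine (Fintype.sum_of_injective e e.injective _ _ ?_ ?_).symm
      · intro j hj
        rw [Function.extend_apply' _ _ _ hj]; simp
      · intro i; rw [e.injective.extend_apply, e.injective.extend_apply]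
  · rintro ⟨⟨w, z⟩, ⟨⟨hw, hw1⟩, hz⟩, rfl⟩
    exact mem_convexHull_of_exists_fintype w z hw hw1 (fun i => hz i trivial) rfl

section
variable {𝕜 : Type*} [RCLike 𝕜] {X : Type*} [NormedAddCommGroup X] [NormedSpace 𝕜 X]

lemma aux_attain [FiniteDimensional 𝕜 X] (Q : X →L[𝕜] X) :
    ∃ (f : X →L[𝕜] 𝕜) (x : X), ‖f‖ ≤ 1 ∧ ‖x‖ ≤ 1 ∧ f (Q x) = (‖Q‖ : 𝕜) := by
  have : ProperSpace X := FiniteDimensional.proper 𝕜 X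
  obtain ⟨x, hx, hmax⟩ := (isCompact_closedBall (0 : X) 1).exists_isMaxOn ⟨0, by simp⟩
    (f := fun x => ‖Q x‖) (by fun_prop)
  obtain ⟨f, hf, hfx⟩ := exists_dual_vector'' 𝕜 (Q x)
  have hx1 : ‖x‖ ≤ 1 := by simpa using hx
  refine ⟨f, x, hf, hx1, ?_⟩
  rw [hfx]
  congr 1
  apply le_antisymm
  · calc ‖Q x‖ ≤ ‖Q‖ * ‖x‖ := Q.le_opNorm x
      _ ≤ ‖Q‖ := mul_le_of_le_one_right (norm_nonneg _) hx1
  · refine Q.opNorm_le_bound (norm_nonneg _) fun z => ?_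
    by_cases hz : z = 0
    · simp [hz]
    have hz' : 0 < ‖z‖ := norm_pos_iff.2 hz
    have h := hmax (a := ((‖z‖⁻¹ : ℝ) : 𝕜) • z) (by
      simp [norm_smul, hz'.ne'])
    simp only [map_smul, norm_smul, Set.mem_ofPred_eq] at h
    rw [RCLike.norm_ofReal, abs_of_pos (inv_pos.2 hz'), inv_mul_le_iff₀ hz'] at h
    linarith

lemma aux_CM.{u} {𝕜 : Type u} [RCLike 𝕜] [NormedSpace 𝕜 X] [FiniteDimensional 𝕜 X]
    {ι : Type} [Fintype ι] (P : X →L[𝕜] X)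
    (T : ι → X →L[𝕜] X) (hmin : ∀ c : ι → 𝕜, ‖P‖ ≤ ‖P + ∑ j, c j • T j‖) :
    ∃ (κ : Type u) (_ : Fintype κ) (α : κ → ℝ) (f : κ → X →L[𝕜] 𝕜) (x : κ → X),
      (∀ i, 0 < α i) ∧ ∑ i, α i = 1 ∧ (∀ i, ‖f i‖ ≤ 1) ∧ (∀ i, ‖x i‖ ≤ 1) ∧
      (∀ i, f i (P (x i)) = (‖P‖ : 𝕜)) ∧ ∀ j, ∑ i, (α i : 𝕜) * f i (T j (x i)) = 0 := by
  classical
  have : ProperSpace X := FiniteDimensional.proper 𝕜 X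
  have : ProperSpace (X →L[𝕜] 𝕜) := FiniteDimensional.proper 𝕜 _
  have : FiniteDimensional ℝ (ι → 𝕜) := inferInstance
  let B : Set ((X →L[𝕜] 𝕜) × X) := closedBall 0 1 ×ˢ closedBall 0 1
  have hB : IsCompact B := (isCompact_closedBall _ _).prod (isCompact_closedBall _ _)
  have hbound : ∀ p ∈ B, ∀ Q : X →L[𝕜] X, ‖p.1 (Q p.2)‖ ≤ ‖Q‖ := by
    rintro ⟨f, x⟩ ⟨hf, hx⟩ Q
    simp only [mem_closedBall, dist_zero_right] at hf hx
    calc ‖f (Q x)‖ ≤ ‖f‖ * ‖Q x‖ := f.le_opNorm _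
      _ ≤ 1 * (‖Q‖ * ‖x‖) := by gcongr; exact Q.le_opNorm x
      _ ≤ 1 * (‖Q‖ * 1) := by gcongr
      _ = ‖Q‖ := by ring
  have hcont : ∀ Q : X →L[𝕜] X, Continuous fun p : (X →L[𝕜] 𝕜) × X => p.1 (Q p.2) := by
    intro Q; fun_prop
  let S : Set ((X →L[𝕜] 𝕜) × X) := B ∩ {p | ‖P‖ ≤ RCLike.re (p.1 (P p.2))}
  have hS : IsCompact S := hB.inter_right
    (isClosed_le continuous_const (RCLike.continuous_re.comp (hcont P)))
  have hSeq : ∀ p ∈ S, p.1 (P p.2) = (‖P‖ : 𝕜) := by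
    rintro p ⟨hpB, hp⟩
    have h1 := hbound p hpB P
    have h2 : ‖p.1 (P p.2)‖ = RCLike.re (p.1 (P p.2)) :=
      le_antisymm (h1.trans hp) (RCLike.re_le_norm _)
    have h3 : RCLike.re (p.1 (P p.2)) = ‖P‖ := le_antisymm (h2 ▸ h1) hp
    rw [← h3]
    exact (RCLike.re_eq_self_of_le (by rw [h2])).symm
  let Φ : (X →L[𝕜] 𝕜) × X → (ι → 𝕜) := fun p j => p.1 (T j p.2)
  have hΦ : Continuous Φ := continuous_pi fun j => hcont (T j)
  have h0 : (0 : ι → 𝕜) ∈ convexHull ℝ (Φ '' S) := by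
    by_contra hcon
    obtain ⟨l, s, hl, hs⟩ := RCLike.geometric_hahn_banach_closed_point (𝕜 := 𝕜)
      (convex_convexHull ℝ (Φ '' S)) (aux_isCompact_convexHull (hS.image hΦ)).isClosed hcon
    simp only [map_zero] at hs
    let c : ι → 𝕜 := fun i => l fun j => if i = j then 1 else 0
    let L : X →L[𝕜] X := ∑ j, c j • T j
    have hL : ∀ p ∈ S, RCLike.re (p.1 (L p.2)) < 0 := by
      intro p hp
      have h1 := (hl _ (subset_convexHull ℝ _ ⟨p, hp, rfl⟩)).trans hs
      have h2 := LinearMap.pi_apply_eq_sum_univ l.toLinearMap (Φ p)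
      have h3 : l (Φ p) = p.1 (L p.2) := by
        refine h2.trans ?_
        simp [L, Φ, c, mul_comm]
      rwa [h3] at h1
    let t : ℕ → ℝ := fun n => 1 / ((n : ℝ) + 1)
    have ht : Filter.Tendsto t Filter.atTop (nhds 0) := tendsto_one_div_add_atTop_nhds_zero_nat
    have htpos : ∀ n, 0 < t n := fun n => by positivity
    have hex : ∀ n, ∃ p ∈ B, ‖P‖ ≤ RCLike.re (p.1 ((P + (t n : 𝕜) • L) p.2)) := by
      intro n
      obtain ⟨f, x, hf, hx, hfx⟩ := aux_attain (P + (t n : 𝕜) • L)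
      refine ⟨(f, x), ⟨by simpa using hf, by simpa using hx⟩, ?_⟩
      dsimp only
      rw [hfx, RCLike.ofReal_re]
      have := hmin (fun j => (t n : 𝕜) * c j)
      simpa [L, Finset.smul_sum, mul_smul] using this
    choose p hpB hp using hex
    obtain ⟨q, hqB, θ, hθ, hlim⟩ := hB.tendsto_subseq hpB
    have hsplit : ∀ n, RCLike.re ((p n).1 ((P + (t n : 𝕜) • L) (p n).2))
        = RCLike.re ((p n).1 (P (p n).2)) + t n * RCLike.re ((p n).1 (L (p n).2)) := by
      intro n; simp
    have hPn : ∀ n, RCLike.re ((p n).1 (P (p n).2)) ≤ ‖P‖ := fun n =>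
      (RCLike.re_le_norm _).trans (hbound _ (hpB n) P)
    have hnn : ∀ n, 0 ≤ RCLike.re ((p n).1 (L (p n).2)) := by
      intro n
      have h1 := hp n
      rw [hsplit] at h1
      have h2 : 0 ≤ t n * RCLike.re ((p n).1 (L (p n).2)) := by linarith [hPn n]
      exact nonneg_of_mul_nonneg_right h2 (htpos n)
    have hlimQ : ∀ Q : X →L[𝕜] X, Filter.Tendsto
        (fun n => RCLike.re ((p (θ n)).1 (Q (p (θ n)).2))) Filter.atTop
        (nhds (RCLike.re (q.1 (Q q.2)))) := fun Q =>
      ((RCLike.continuous_re.comp (hcont Q)).tendsto q).comp hlim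
    have hqL : 0 ≤ RCLike.re (q.1 (L q.2)) :=
      ge_of_tendsto' (hlimQ L) fun n => hnn _
    have hqP : ‖P‖ ≤ RCLike.re (q.1 (P q.2)) := by
      have h1 := (hlimQ P).add ((ht.comp hθ.tendsto_atTop).mul (hlimQ L))
      rw [zero_mul, add_zero] at h1
      refine ge_of_tendsto' h1 fun n => ?_
      have := hp (θ n)
      rwa [hsplit] at this
    exact absurd (hL q ⟨hqB, hqP⟩) (not_lt.2 hqL)
  obtain ⟨κ, hκ, z, w, hz, -, hw, hw1, hsum⟩ := eq_pos_convex_span_of_mem_convexHull h0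
  choose p hpS hpz using fun i => hz ⟨i, rfl⟩
  refine ⟨κ, hκ, w, fun i => (p i).1, fun i => (p i).2, hw, hw1, fun i => ?_, fun i => ?_,
    fun i => hSeq _ (hpS i), fun j => ?_⟩
  · simpa using (hpS i).1.1
  · simpa using (hpS i).1.2
  · have := congrFun hsum j
    simpa [← hpz, Φ, RCLike.real_smul_eq_coe_mul] using this
lemma aux_span [FiniteDimensional 𝕜 X] {n : ℕ} (h3 : finrank 𝕜 X = n + 1) (Y : Submodule 𝕜 X)
    (h2 : finrank 𝕜 Y = n) : ∃ u, ∀ x, ∃ c : 𝕜, x - c • u ∈ Y := by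
  have h := Y.finrank_quotient_add_finrank
  have h1 : finrank 𝕜 (X ⧸ Y) = 1 := by omega
  obtain ⟨v, -, hv⟩ := finrank_eq_one_iff'.1 h1
  obtain ⟨u, rfl⟩ := Submodule.Quotient.mk_surjective Y v
  refine ⟨u, fun x => ?_⟩
  obtain ⟨c, hc⟩ := hv (Submodule.Quotient.mk x)
  refine ⟨c, ?_⟩
  rw [← Submodule.Quotient.mk_smul] at hc
  exact (Submodule.Quotient.eq Y).1 hc.symm

lemma aux_exists [FiniteDimensional 𝕜 X] (Y : Submodule 𝕜 X) (hlam : 1 < relProjConst Y) :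
    ∃ P ∈ MinProjSet Y, ∀ Q, IsProjOnto Y Q → ‖P‖ ≤ ‖Q‖ := by
  have : ProperSpace (X →L[𝕜] X) := FiniteDimensional.proper 𝕜 _
  have hne : {P : X →L[𝕜] X | IsProjOnto Y P}.Nonempty := by
    by_contra hcon
    rw [Set.not_nonempty_iff_eq_empty] at hcon
    have : {c | ∃ P : X →L[𝕜] X, IsProjOnto Y P ∧ ‖P‖ = c} = ∅ := by
      ext c
      simp only [Set.mem_ofPred_eq, Set.mem_empty_iff_false, iff_false]
      rintro ⟨P, hP, -⟩
      have : P ∈ {P : X →L[𝕜] X | IsProjOnto Y P} := hP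
      rw [hcon] at this
      exact this
    unfold relProjConst at hlam
    rw [this, Real.sInf_empty] at hlam
    linarith
  have hcl : IsClosed {P : X →L[𝕜] X | IsProjOnto Y P} := by
    have hY : IsClosed (Y : Set X) := Y.closed_of_finiteDimensional
    have : {P : X →L[𝕜] X | IsProjOnto Y P} =
        (⋂ x, {P | P x ∈ (Y : Set X)}) ∩ ⋂ y ∈ Y, {P | P y = y} := by
      ext P; simp [IsProjOnto]
    rw [this]
    refine (isClosed_iInter fun x => hY.preimage (by fun_prop)).inter ?_
    exact isClosed_iInter fun y => isClosed_iInter fun _ =>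
      isClosed_eq (by fun_prop) continuous_const
  obtain ⟨P, hP, hd⟩ := hcl.exists_infDist_eq_dist hne 0
  have hle : ∀ Q, IsProjOnto Y Q → ‖P‖ ≤ ‖Q‖ := by
    intro Q hQ
    have := infDist_le_dist_of_mem (x := (0 : X →L[𝕜] X)) (show Q ∈ {P | IsProjOnto Y P} from hQ)
    rw [hd] at this
    simpa using this
  refine ⟨P, ⟨hP, ?_⟩, hle⟩
  have : IsLeast {c | ∃ P : X →L[𝕜] X, IsProjOnto Y P ∧ ‖P‖ = c} ‖P‖ := by
    refine ⟨⟨P, hP, rfl⟩, ?_⟩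
    rintro c ⟨Q, hQ, rfl⟩
    exact hle Q hQ
  exact this.csInf_eq.symm

end

/-- Let `X` be a three-dimensional normed space over `ℝ` or `ℂ` and `Y` a
two-dimensional subspace with `λ(Y, X) > 1`. Then the minimal projection `P` onto `Y`
is unique, and it is `2`-strongly unique: there is `r > 0` with
`‖Q‖² ≥ ‖P‖² + r ‖Q - P‖²` for every projection `Q` onto `Y`. -/
theorem dim_three_unique_and_two_strongly_unique [FiniteDimensional 𝕜 X]
    (h3 : finrank 𝕜 X = 3) (Y : Submodule 𝕜 X) (h2 : finrank 𝕜 Y = 2)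
    (hlam : 1 < relProjConst Y) :
    ∃ P ∈ MinProjSet Y, (∀ Q ∈ MinProjSet Y, Q = P) ∧
      ∃ r > (0 : ℝ), ∀ Q : X →L[𝕜] X, IsProjOnto Y Q →
        ‖P‖ ^ 2 + r * ‖Q - P‖ ^ 2 ≤ ‖Q‖ ^ 2 := by
  obtain ⟨P, hPmin, hPle⟩ := aux_exists Y hlam
  have hP : IsProjOnto Y P := hPmin.1
  have hP1 : 1 < ‖P‖ := by rw [hPmin.2]; exact hlam
  -- it is enough to prove the inequality
  suffices h : ∃ r > (0 : ℝ), ∀ Q : X →L[𝕜] X, IsProjOnto Y Q →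
      ‖P‖ ^ 2 + r * ‖Q - P‖ ^ 2 ≤ ‖Q‖ ^ 2 by
    refine ⟨P, hPmin, ?_, h⟩
    obtain ⟨r, hr, h⟩ := h
    intro Q hQ
    have h1 := h Q hQ.1
    rw [hQ.2, hPmin.2] at h1
    have h2 : r * ‖Q - P‖ ^ 2 ≤ 0 := by linarith
    have h3 : ‖Q - P‖ ^ 2 ≤ 0 := by
      by_contra hc
      push Not at hc
      exact absurd (mul_pos hr hc) (not_lt.2 h2)
    have h4 : ‖Q - P‖ = 0 := by
      have := sq_nonneg ‖Q - P‖
      exact pow_eq_zero_iff (two_ne_zero) |>.1 (le_antisymm h3 this)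
    exact sub_eq_zero.1 (norm_eq_zero.1 h4)
  -- the complementary vector and the functional
  obtain ⟨u₀, hu₀⟩ := aux_span (n := 2) h3 Y h2
  let u : X := u₀ - P u₀
  have hxu : ∀ x, ∃ c : 𝕜, x - P x = c • u := by
    intro x
    obtain ⟨c, hc⟩ := hu₀ x
    refine ⟨c, ?_⟩
    have := hP.2 _ hc
    rw [map_sub, map_smul] at this
    simp only [u, smul_sub]
    rw [sub_eq_sub_iff_add_eq_add] at this ⊢
    rw [add_comm (c • u₀), ← this, add_comm]
  have hPu : P u = 0 := by
    simp only [u, map_sub]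
    rw [hP.2 _ (hP.1 u₀), sub_self]
  have hu : u ≠ 0 := by
    intro h0
    have hY : Y = ⊤ := by
      rw [eq_top_iff]
      intro x _
      obtain ⟨c, hc⟩ := hxu x
      rw [h0, smul_zero, sub_eq_zero] at hc
      rw [hc]; exact hP.1 x
    rw [hY, finrank_top] at h2
    omega
  obtain ⟨ψ, hψ⟩ : ∃ ψ : StrongDual 𝕜 X, ψ u = 1 := SeparatingDual.exists_eq_one hu
  let φ : X →L[𝕜] 𝕜 := ψ.comp (ContinuousLinearMap.id 𝕜 X - P)
  have hφ : ∀ x, x = P x + φ x • u := by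
    intro x
    obtain ⟨c, hc⟩ := hxu x
    have : φ x = c := by
      simp only [φ, ContinuousLinearMap.comp_apply, ContinuousLinearMap.sub_apply,
        ContinuousLinearMap.id_apply]
      rw [hc, map_smul, hψ, smul_eq_mul, mul_one]
    rw [this, ← hc]; abel
  have hφY : ∀ y ∈ Y, φ y = 0 := by
    intro y hy
    simp [φ, hP.2 y hy]
  -- Chalmers-Metcalf functional
  let b : Basis (Fin 2) 𝕜 Y := finBasisOfFinrankEq 𝕜 Y h2
  obtain ⟨κ, _, α, f, x, hα, hα1, hf, hx, hfP, hsum⟩ := aux_CM P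
    (fun j : Fin 2 => φ.smulRight (b j : X)) (by
      intro c
      apply hPle
      have hval : ∀ x, (P + ∑ j, c j • φ.smulRight (b j : X)) x
          = P x + φ x • ((∑ j, c j • b j : Y) : X) := by
        intro x
        simp [smul_smul, mul_comm]
      refine ⟨fun x => ?_, fun y hy => ?_⟩
      · rw [hval]
        exact Y.add_mem (hP.1 x) (Y.smul_mem _ (Subtype.mem _))
      · rw [hval, hφY y hy, zero_smul, add_zero, hP.2 y hy])
  have hsumY : ∀ y ∈ Y, ∑ i, (α i : 𝕜) * (φ (x i) * f i y) = 0 := by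
    intro y hy
    have h1 : y = ∑ j, b.repr ⟨y, hy⟩ j • (b j : X) := by
      have := congrArg Y.subtype (b.sum_repr ⟨y, hy⟩)
      rw [map_sum] at this
      exact this.symm
    have h4 : ∀ i, (α i : 𝕜) * (φ (x i) * f i y) = ∑ j, b.repr ⟨y, hy⟩ j *
        ((α i : 𝕜) * f i (φ.smulRight (b j : X) (x i))) := by
      intro i
      conv_lhs => rw [h1]
      rw [map_sum, Finset.mul_sum, Finset.mul_sum]
      refine Finset.sum_congr rfl fun j _ => ?_
      simp only [map_smul, smul_eq_mul, ContinuousLinearMap.smulRight_apply]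
      ring
    simp_rw [h4]
    rw [Finset.sum_comm]
    refine Finset.sum_eq_zero fun j _ => ?_
    rw [← Finset.mul_sum, hsum j, mul_zero]
  have hbd : ∀ i k, ‖f k (x i)‖ ≤ 1 := by
    intro i k
    calc ‖f k (x i)‖ ≤ ‖f k‖ * ‖x i‖ := (f k).le_opNorm _
      _ ≤ 1 * 1 := mul_le_mul (hf k) (hx i) (norm_nonneg _) zero_le_one
      _ = 1 := one_mul 1
  have hφx : ∀ i, φ (x i) ≠ 0 := by
    intro i h0
    have h1 := hφ (x i)
    rw [h0, zero_smul, add_zero] at h1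
    have h4 := hbd i i
    rw [h1, hfP, RCLike.norm_ofReal, abs_of_nonneg (norm_nonneg _)] at h4
    linarith
  have hP0 : (‖P‖ : 𝕜) ≠ 0 := by
    rw [Ne, RCLike.ofReal_eq_zero]
    linarith
  have hne : Nonempty κ := by
    by_contra hc
    rw [not_nonempty_iff] at hc
    simp at hα1
  have hker : ∀ y ∈ Y, (∀ i, f i y = 0) → y = 0 := by
    intro y hy hfy
    by_contra hy0
    obtain ⟨z, hz⟩ : ∃ z ∈ Y, ∀ w ∈ Y, ∃ c d : 𝕜, w = c • z + d • y := by
      have hy0' : (⟨y, hy⟩ : Y) ≠ 0 := fun h => hy0 (congrArg Subtype.val h)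
      obtain ⟨z, hz⟩ := aux_span (n := 1) h2 (𝕜 ∙ (⟨y, hy⟩ : Y)) (finrank_span_singleton hy0')
      refine ⟨z, z.2, fun w hw => ?_⟩
      obtain ⟨c, hc⟩ := hz ⟨w, hw⟩
      obtain ⟨d, hd⟩ := Submodule.mem_span_singleton.1 hc
      refine ⟨c, d, ?_⟩
      have := congrArg Subtype.val hd
      simp only [Submodule.coe_smul, Submodule.coe_sub] at this
      rw [this]; abel
    obtain ⟨hzY, hz⟩ := hz
    obtain ⟨k, -, hk⟩ := Finset.exists_max_image Finset.univ (fun i => ‖f i z‖)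
      Finset.univ_nonempty
    have hfz : f k z ≠ 0 := by
      intro h0
      have h1 : ∀ i, f i z = 0 := by
        intro i
        have := hk i (Finset.mem_univ i)
        rw [h0, norm_zero] at this
        exact norm_le_zero_iff.1 this
      obtain ⟨c, d, hcd⟩ := hz (P (x k)) (hP.1 _)
      have h4 := hfP k
      rw [hcd, map_add, map_smul, map_smul, h1, hfy] at h4
      rw [smul_zero, smul_zero, add_zero] at h4
      exact hP0 h4.symm
    have hprop : ∀ i, ∀ w ∈ Y, f i z / f k z * f k w = f i w := by
      intro i w hw
      obtain ⟨c, d, rfl⟩ := hz w hw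
      simp only [map_add, map_smul, hfy, smul_eq_mul, mul_zero, add_zero]
      field_simp
    have hi : ∀ i, f i z / f k z * f k (x i) =
        (‖P‖ : 𝕜) + f k u / f k z * (φ (x i) * f i z) := by
      intro i
      have h1 : f k (x i) = f k (P (x i)) + φ (x i) * f k u := by
        conv_lhs => rw [hφ (x i)]
        simp
      rw [h1, mul_add, hprop i _ (hP.1 _), hfP]
      ring
    have hS : ∑ i, (α i : 𝕜) * (f i z / f k z * f k (x i)) = (‖P‖ : 𝕜) := by
      have h1 : ∀ i, (α i : 𝕜) * (f i z / f k z * f k (x i)) =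
          (α i : 𝕜) * (‖P‖ : 𝕜) + f k u / f k z * ((α i : 𝕜) * (φ (x i) * f i z)) := by
        intro i; rw [hi]; ring
      simp_rw [h1]
      rw [Finset.sum_add_distrib, ← Finset.mul_sum, hsumY z hzY, mul_zero, add_zero,
        ← Finset.sum_mul, ← RCLike.ofReal_sum, hα1]
      simp
    have h1 : ‖P‖ ≤ 1 := by
      calc ‖P‖ = ‖((‖P‖ : ℝ) : 𝕜)‖ := by simp
        _ = ‖∑ i, (α i : 𝕜) * (f i z / f k z * f k (x i))‖ := by rw [hS]
        _ ≤ ∑ i, ‖(α i : 𝕜) * (f i z / f k z * f k (x i))‖ := norm_sum_le _ _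
        _ ≤ ∑ i, α i := by
          refine Finset.sum_le_sum fun i _ => ?_
          rw [norm_mul, RCLike.norm_ofReal, abs_of_pos (hα i), norm_mul, norm_div]
          have h5 : ‖f i z‖ / ‖f k z‖ ≤ 1 :=
            div_le_one_of_le₀ (hk i (Finset.mem_univ i)) (norm_nonneg _)
          have h6 : ‖f i z‖ / ‖f k z‖ * ‖f k (x i)‖ ≤ 1 :=
            mul_le_one₀ h5 (norm_nonneg _) (hbd i k)
          exact mul_le_of_le_one_right (hα i).le h6
        _ = 1 := hα1
    linarith
  -- lower bound by finite-dimensionality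
  let G : Y →ₗ[𝕜] (κ → 𝕜) := LinearMap.pi fun i =>
    ((Real.sqrt (α i) : 𝕜) * φ (x i)) • ((f i).toLinearMap.comp Y.subtype)
  have hG : ∀ y i, G y i = (Real.sqrt (α i) : 𝕜) * φ (x i) * f i (y : X) := fun y i => rfl
  have hGker : LinearMap.ker G = ⊥ := by
    rw [LinearMap.ker_eq_bot']
    intro y hy
    apply Subtype.ext
    refine hker y y.2 fun i => ?_
    have h1 := congrFun hy i
    rw [hG] at h1
    have h4 : (Real.sqrt (α i) : 𝕜) ≠ 0 := by
      rw [Ne, RCLike.ofReal_eq_zero]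
      exact (Real.sqrt_pos.2 (hα i)).ne'
    exact (mul_eq_zero.1 h1).resolve_left (mul_ne_zero h4 (hφx i))
  obtain ⟨K, hK, hanti⟩ := G.exists_antilipschitzWith hGker
  have hlow : ∀ y : Y, ‖y‖ ^ 2 ≤ (K : ℝ) ^ 2 * ∑ i, α i * ‖φ (x i) * f i (y : X)‖ ^ 2 := by
    intro y
    have h1 : ‖y‖ ≤ K * ‖G y‖ := by
      have := hanti.le_mul_dist y 0
      simpa using this
    have hnn : 0 ≤ ∑ i, α i * ‖φ (x i) * f i (y : X)‖ ^ 2 :=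
      Finset.sum_nonneg fun i _ => mul_nonneg (hα i).le (sq_nonneg _)
    have h4 : ‖G y‖ ≤ Real.sqrt (∑ i, α i * ‖φ (x i) * f i (y : X)‖ ^ 2) := by
      rw [pi_norm_le_iff_of_nonneg (Real.sqrt_nonneg _)]
      intro i
      apply Real.le_sqrt_of_sq_le
      have h5 : ‖G y i‖ ^ 2 = α i * ‖φ (x i) * f i (y : X)‖ ^ 2 := by
        rw [hG, mul_assoc, norm_mul, mul_pow, RCLike.norm_ofReal, sq_abs, Real.sq_sqrt (hα i).le]
      rw [h5]
      exact Finset.single_le_sum (f := fun i => α i * ‖φ (x i) * f i (y : X)‖ ^ 2)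
        (fun i _ => mul_nonneg (hα i).le (sq_nonneg _)) (Finset.mem_univ i)
    calc ‖y‖ ^ 2 ≤ (K * Real.sqrt (∑ i, α i * ‖φ (x i) * f i (y : X)‖ ^ 2)) ^ 2 := by
          gcongr
          exact h1.trans (by gcongr)
      _ = _ := by rw [mul_pow, Real.sq_sqrt hnn]
  have hK' : (0 : ℝ) < K := hK
  refine ⟨(((K : ℝ) ^ 2) * ‖φ‖ ^ 2 + 1)⁻¹, by positivity, fun Q hQ => ?_⟩
  have hQx : ∀ z, Q z = P z + φ z • Q u := by
    intro z
    conv_lhs => rw [hφ z]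
    rw [map_add, map_smul, hQ.2 _ (hP.1 z)]
  set N : ℝ := ∑ i, α i * ‖φ (x i) * f i (Q u)‖ ^ 2 with hN
  have hN0 : 0 ≤ N := Finset.sum_nonneg fun i _ => mul_nonneg (hα i).le (sq_nonneg _)
  have hmain : ‖P‖ ^ 2 + N ≤ ‖Q‖ ^ 2 := by
    have h1 : ∀ i, ‖P‖ ^ 2 + 2 * ‖P‖ * RCLike.re (φ (x i) * f i (Q u))
        + ‖φ (x i) * f i (Q u)‖ ^ 2 ≤ ‖Q‖ ^ 2 := by
      intro i
      have h4 : f i (Q (x i)) = (‖P‖ : 𝕜) + φ (x i) * f i (Q u) := by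
        rw [hQx, map_add, hfP, map_smul, smul_eq_mul]
      have h5 : ‖f i (Q (x i))‖ ≤ ‖Q‖ := by
        calc ‖f i (Q (x i))‖ ≤ ‖f i‖ * ‖Q (x i)‖ := (f i).le_opNorm _
          _ ≤ 1 * (‖Q‖ * 1) := by
            refine mul_le_mul (hf i) ?_ (norm_nonneg _) zero_le_one
            exact (Q.le_opNorm _).trans (mul_le_mul_of_nonneg_left (hx i) (norm_nonneg _))
          _ = ‖Q‖ := by ring
      have h6 : ‖f i (Q (x i))‖ ^ 2 ≤ ‖Q‖ ^ 2 := by gcongr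
      refine le_trans (le_of_eq ?_) h6
      rw [h4]
      generalize φ (x i) * f i (Q u) = v
      rw [RCLike.norm_sq_eq_def, RCLike.norm_sq_eq_def]
      simp only [map_add, RCLike.ofReal_re, RCLike.ofReal_im]
      ring
    have hre : ∑ i, α i * RCLike.re (φ (x i) * f i (Q u)) = 0 := by
      have := congrArg RCLike.re (hsumY (Q u) (hQ.1 u))
      simpa only [map_sum, RCLike.re_ofReal_mul, map_zero] using this
    calc ‖P‖ ^ 2 + N = (∑ i, α i) * ‖P‖ ^ 2
          + 2 * ‖P‖ * (∑ i, α i * RCLike.re (φ (x i) * f i (Q u))) + N := by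
          rw [hre, hα1]; ring
      _ = ∑ i, α i * (‖P‖ ^ 2 + 2 * ‖P‖ * RCLike.re (φ (x i) * f i (Q u))
            + ‖φ (x i) * f i (Q u)‖ ^ 2) := by
          rw [hN, Finset.sum_mul, Finset.mul_sum, ← Finset.sum_add_distrib,
            ← Finset.sum_add_distrib]
          exact Finset.sum_congr rfl fun i _ => by ring
      _ ≤ ∑ i, α i * ‖Q‖ ^ 2 :=
          Finset.sum_le_sum fun i _ => mul_le_mul_of_nonneg_left (h1 i) (hα i).le
      _ = ‖Q‖ ^ 2 := by rw [← Finset.sum_mul, hα1, one_mul]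
  have hQP : ‖Q - P‖ ≤ ‖φ‖ * ‖Q u‖ := by
    refine ContinuousLinearMap.opNorm_le_bound _ (by positivity) fun z => ?_
    have : (Q - P) z = φ z • Q u := by
      rw [ContinuousLinearMap.sub_apply, hQx]; abel
    rw [this, norm_smul]
    calc ‖φ z‖ * ‖Q u‖ ≤ (‖φ‖ * ‖z‖) * ‖Q u‖ := by gcongr; exact φ.le_opNorm z
      _ = _ := by ring
  have hfin : ‖Q - P‖ ^ 2 ≤ (K : ℝ) ^ 2 * ‖φ‖ ^ 2 * N := by
    have h1 : ‖Q u‖ ^ 2 ≤ (K : ℝ) ^ 2 * N := hlow ⟨Q u, hQ.1 u⟩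
    calc ‖Q - P‖ ^ 2 ≤ (‖φ‖ * ‖Q u‖) ^ 2 := by gcongr
      _ = ‖φ‖ ^ 2 * ‖Q u‖ ^ 2 := by ring
      _ ≤ ‖φ‖ ^ 2 * ((K : ℝ) ^ 2 * N) := by gcongr
      _ = _ := by ring
  have h5 : ((K : ℝ) ^ 2 * ‖φ‖ ^ 2 + 1)⁻¹ * ‖Q - P‖ ^ 2 ≤ N := by
    rw [inv_mul_le_iff₀ (by positivity)]
    linarith
  linarith
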